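/- arXiv:math/0610841 — 5 statements merged into one kernel-verified Lean document; each statement's English description precedes it below -/
import Mathlib

section
/- Let 0 < γ < 1 and 0 < α < 1. For every measurable set R ⊆ (0,1) that is symmetric (for all x ∈ (0,1), x ∈ R if and only if 1 − x ∈ R) and has Lebesgue measure α, the power of R against f₁ is at most the power of the central region: ∫_R (1+γ)x^γ dx ≤ ∫_{C_α} (1+γ)x^γ dx. (For concave alternatives the central test is the most powerful symmetric size-α test.) -/
open MeasureTheory Set

lemma key_aux (γ : ℝ) (hγ0 : 0 < γ) (hγ1 : γ < 1) (a x : ℝ) (ha : 0 ≤ a) (h1 : a ≤ x)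
    (h2 : x ≤ 1 - a) : a ^ γ + (1 - a) ^ γ ≤ x ^ γ + (1 - x) ^ γ := by
  rcases eq_or_lt_of_le (show a ≤ 1 - a by linarith) with h | h
  · have : x = a := by linarith
    rw [this]
  have hd : 0 < 1 - 2 * a := by linarith
  have hc := Real.concaveOn_rpow hγ0.le hγ1.le
  have ht : 0 ≤ (1 - a - x) / (1 - 2 * a) := div_nonneg (by linarith) hd.le
  have hs : 0 ≤ (x - a) / (1 - 2 * a) := div_nonneg (by linarith) hd.le
  have hst : (1 - a - x) / (1 - 2 * a) + (x - a) / (1 - 2 * a) = 1 := by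
    rw [← add_div, div_eq_one_iff_eq hd.ne']; ring
  have ma : a ∈ Ici (0:ℝ) := ha
  have mb : 1 - a ∈ Ici (0:ℝ) := by simp only [mem_Ici]; linarith
  have e1 := hc.2 ma mb ht hs hst
  have e2 := hc.2 mb ma ht hs hst
  have hx : (1 - a - x) / (1 - 2 * a) * (1 - 2 * a) = 1 - a - x := div_mul_cancel₀ _ hd.ne'
  set t := (1 - a - x) / (1 - 2 * a)
  set s := (x - a) / (1 - 2 * a)
  have hs' : s = 1 - t := by linarith
  simp only [smul_eq_mul] at e1 e2
  have q1 : t * a + s * (1 - a) = x := by rw [hs']; linarith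
  have q2 : t * (1 - a) + s * a = 1 - x := by rw [hs']; linarith
  rw [q1] at e1
  rw [q2] at e2
  rw [hs'] at e1 e2
  linarith

lemma refl_aux (f : ℝ → ℝ) (S : Set ℝ) (hm : MeasurableSet S) (hS : ∀ x, x ∈ S ↔ 1 - x ∈ S) :
    ∫ x in S, f (1 - x) = ∫ x in S, f x := by
  rw [← integral_indicator hm, ← integral_indicator hm,
    ← integral_sub_left_eq_self (S.indicator f) volume 1]
  congr 1
  ext x
  by_cases h : x ∈ S
  · rw [indicator_of_mem h, indicator_of_mem ((hS x).1 h)]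
  · rw [indicator_of_notMem h, indicator_of_notMem (fun h' => h ((hS x).2 h'))]

theorem central_most_powerful_concave (γ α : ℝ) (hγ0 : 0 < γ) (hγ1 : γ < 1)
    (hα0 : 0 < α) (hα1 : α < 1) (R : Set ℝ)
    (hRmeas : MeasurableSet R) (hRsub : R ⊆ Ioo 0 1)
    (hRsym : ∀ x ∈ Ioo (0:ℝ) 1, x ∈ R ↔ 1 - x ∈ R)
    (hRvol : volume R = ENNReal.ofReal α) :
    ∫ x in R, (1+γ) * x ^ γ ∂volume ≤
      ∫ x in Ioo (1/2 - α/2 : ℝ) (1/2 + α/2), (1+γ) * x ^ γ ∂volume := by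
  rw [integral_const_mul, integral_const_mul]
  refine mul_le_mul_of_nonneg_left ?_ (by linarith)
  set C := Ioo (1/2 - α/2 : ℝ) (1/2 + α/2) with hC
  have hCm : MeasurableSet C := measurableSet_Ioo
  have hCsub : C ⊆ Ioo 0 1 := Ioo_subset_Ioo (by linarith) (by linarith)
  have hCs : ∀ x, x ∈ C ↔ 1 - x ∈ C := by
    intro x
    simp only [hC, mem_Ioo]
    constructor <;> rintro ⟨h1, h2⟩ <;> constructor <;> linarith
  have hRs : ∀ x, x ∈ R ↔ 1 - x ∈ R := by
    intro x
    constructor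
    · intro h; exact (hRsym x (hRsub h)).1 h
    · intro h
      have := hRsub h
      exact (hRsym x ⟨by linarith [this.2], by linarith [this.1]⟩).2 h
  have hCvol : volume C = ENNReal.ofReal α := by
    rw [hC, Real.volume_Ioo]; congr 1; ring
  have hcont : Continuous (fun x : ℝ => x ^ γ) := Real.continuous_rpow_const hγ0.le
  have hcont' : Continuous (fun x : ℝ => (1 - x) ^ γ) := hcont.comp (by fun_prop)
  have hint : ∀ f : ℝ → ℝ, Continuous f → ∀ S ⊆ Ioo (0:ℝ) 1, IntegrableOn f S := by
    intro f hf S hS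
    exact (hf.integrableOn_Icc (a := 0) (b := 1)).mono_set (hS.trans Ioo_subset_Icc_self)
  set c := (1/2 - α/2 : ℝ) ^ γ + (1 - (1/2 - α/2)) ^ γ with hc
  have main : ∀ S ⊆ Ioo (0:ℝ) 1, MeasurableSet S → (∀ x, x ∈ S ↔ 1 - x ∈ S) →
      volume S = ENNReal.ofReal α →
      ∫ x, S.indicator (fun x => x ^ γ + (1 - x) ^ γ - c) x = 2 * (∫ x in S, x ^ γ) - α * c := by
    intro S hS hm hs hv
    have i1 := hint _ hcont S hS
    have i2 := hint _ hcont' S hS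
    have i12 : IntegrableOn (fun x : ℝ => x ^ γ + (1 - x) ^ γ) S := i1.add i2
    have i3 := hint (fun _ => c) continuous_const S hS
    have r := refl_aux (fun x => x ^ γ) S hm hs
    rw [integral_indicator hm, integral_sub i12 i3, integral_add i1 i2]

    rw [r, setIntegral_const, Measure.real, hv, ENNReal.toReal_ofReal hα0.le, smul_eq_mul]
    ring
  have hg : Continuous (fun x : ℝ => x ^ γ + (1 - x) ^ γ - c) :=
    (hcont.add hcont').sub continuous_const
  have le : ∫ x, R.indicator (fun x => x ^ γ + (1 - x) ^ γ - c) x ≤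
      ∫ x, C.indicator (fun x => x ^ γ + (1 - x) ^ γ - c) x := by
    apply integral_mono ((hint _ hg R hRsub).integrable_indicator hRmeas)
      ((hint _ hg C hCsub).integrable_indicator hCm)
    intro x
    by_cases hxC : x ∈ C
    · have : 0 ≤ x ^ γ + (1 - x) ^ γ - c := by
        have := key_aux γ hγ0 hγ1 (1/2 - α/2) x (by linarith) hxC.1.le (by linarith [hxC.2])
        linarith
      by_cases hxR : x ∈ R <;> simp [hxC, hxR] at this ⊢ <;> linarith
    · by_cases hxR : x ∈ R
      · have : x ^ γ + (1 - x) ^ γ - c ≤ 0 := by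
          obtain ⟨h0, h1⟩ := hRsub hxR
          rcases le_or_gt x (1/2 - α/2) with h | h
          · have := key_aux γ hγ0 hγ1 x (1/2 - α/2) h0.le h (by linarith)
            linarith
          · have h' : 1/2 + α/2 ≤ x := by
              by_contra h'
              exact hxC ⟨h, not_le.1 h'⟩
            have := key_aux γ hγ0 hγ1 (1 - x) (1/2 - α/2) (by linarith) (by linarith) (by linarith)
            rw [sub_sub_cancel] at this
            linarith
        simp [hxC, hxR] at this ⊢; linarith
      · simp [hxC, hxR]
  rw [main R hRsub hRmeas hRs hRvol, main C hCsub hCm hCs hCvol] at le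
  linarith
end

section
/- Let 0 < γ < 1 and 0 < α < 1. For every measurable set R ⊆ (0,1) that is symmetric (for all x ∈ (0,1), x ∈ R if and only if 1 − x ∈ R) and has Lebesgue measure α, the power of R against f₁ is at least the power of the extreme-tails region: ∫_R (1+γ)x^γ dx ≥ ∫_{E_α} (1+γ)x^γ dx. (For concave alternatives the extreme-tails test, which is the maximum-likelihood-ratio test, is the least powerful symmetric size-α test.) -/
open MeasureTheory Set

lemma aux_mono (γ : ℝ) (h0 : 0 < γ) (h1 : γ < 1) (a x : ℝ) (ha : 0 ≤ a) (hax : a ≤ x)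
    (hx : x ≤ 1 - a) : a ^ γ + (1 - a) ^ γ ≤ x ^ γ + (1 - x) ^ γ := by
  have hg := Real.concaveOn_rpow h0.le h1.le
  rcases eq_or_lt_of_le (hax.trans hx) with he | hlt
  · have : x = a := by linarith
    rw [this]
  have hd : 0 < 1 - a - a := by linarith
  set t := (1 - a - x) / (1 - a - a) with ht
  have ht0 : 0 ≤ t := div_nonneg (by linarith) hd.le
  have ht1 : 0 ≤ 1 - t := by
    have : t ≤ 1 := by rw [ht, div_le_one hd]; linarith
    linarith
  have hmul : t * (1 - a - a) = 1 - a - x := div_mul_cancel₀ _ hd.ne'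
  have e1 := hg.2 (x := a) (y := 1 - a) ha (show (0:ℝ) ≤ 1 - a by linarith) ht0 ht1 (by ring)
  have e2 := hg.2 (x := a) (y := 1 - a) ha (show (0:ℝ) ≤ 1 - a by linarith) ht1 ht0 (by ring)
  simp only [smul_eq_mul] at e1 e2
  have x1 : t * a + (1 - t) * (1 - a) = x := by linarith
  have x2 : (1 - t) * a + t * (1 - a) = 1 - x := by linarith
  rw [x1] at e1
  rw [x2] at e2
  linarith

lemma aux_int (γ : ℝ) (h0 : 0 < γ) (S : Set ℝ) (hsub : S ⊆ Icc 0 1) :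
    IntegrableOn (fun x : ℝ => x ^ γ) S ∧ IntegrableOn (fun x : ℝ => (1 - x) ^ γ) S := by
  have c : Continuous (fun x : ℝ => x ^ γ) := Real.continuous_rpow_const h0.le
  have c2 : Continuous (fun x : ℝ => (1 - x) ^ γ) := c.comp (continuous_const.sub continuous_id)
  exact ⟨(c.continuousOn.integrableOn_compact isCompact_Icc).mono_set hsub,
    (c2.continuousOn.integrableOn_compact isCompact_Icc).mono_set hsub⟩

lemma aux_sym (γ : ℝ) (S : Set ℝ) (hm : MeasurableSet S)
    (hs : ∀ x, x ∈ S ↔ 1 - x ∈ S) :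
    ∫ x in S, (1 - x) ^ γ = ∫ x in S, x ^ γ := by
  rw [← integral_indicator hm, ← integral_indicator hm,
    ← integral_sub_left_eq_self (S.indicator fun x : ℝ => x ^ γ) volume 1]
  congr 1
  ext x
  by_cases hx : x ∈ S
  · rw [indicator_of_mem hx, indicator_of_mem ((hs x).1 hx)]
  · rw [indicator_of_notMem hx, indicator_of_notMem (fun h => hx ((hs x).2 h))]

lemma aux_split (γ c : ℝ) (h0 : 0 < γ) (S : Set ℝ) (hm : MeasurableSet S)
    (hsub : S ⊆ Icc 0 1) (hs : ∀ x, x ∈ S ↔ 1 - x ∈ S) :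
    IntegrableOn (fun x : ℝ => x ^ γ + (1 - x) ^ γ - c) S ∧
    ∫ x in S, (x ^ γ + (1 - x) ^ γ - c) = 2 * (∫ x in S, x ^ γ) - volume.real S * c := by
  obtain ⟨i1, i2⟩ := aux_int γ h0 S hsub
  have ic : IntegrableOn (fun _ : ℝ => c) S :=
    (continuous_const.continuousOn.integrableOn_compact isCompact_Icc).mono_set hsub
  refine ⟨(i1.add i2).sub ic, ?_⟩
  have e1 := integral_sub (i1.add i2) ic
  have e2 := integral_add i1 i2
  simp only [Pi.add_apply] at e1
  rw [e1, e2, aux_sym γ S hm hs, setIntegral_const, smul_eq_mul]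
  ring

theorem extreme_tails_least_powerful_concave (γ α : ℝ) (hγ0 : 0 < γ) (hγ1 : γ < 1)
    (hα0 : 0 < α) (hα1 : α < 1) (R : Set ℝ)
    (hRmeas : MeasurableSet R) (hRsub : R ⊆ Ioo 0 1)
    (hRsym : ∀ x ∈ Ioo (0:ℝ) 1, x ∈ R ↔ 1 - x ∈ R)
    (hRvol : volume R = ENNReal.ofReal α) :
    ∫ x in R, (1+γ) * x ^ γ ∂volume ≥
      ∫ x in Ioo (0:ℝ) (α/2) ∪ Ioo (1 - α/2) 1, (1+γ) * x ^ γ ∂volume := by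
  rw [integral_const_mul, integral_const_mul]
  refine mul_le_mul_of_nonneg_left ?_ (by linarith)
  set E := Ioo (0:ℝ) (α/2) ∪ Ioo (1 - α/2) 1 with hE
  have hEm : MeasurableSet E := measurableSet_Ioo.union measurableSet_Ioo
  have hEsub : E ⊆ Icc 0 1 := by
    rintro x (⟨h1, h2⟩ | ⟨h1, h2⟩) <;> constructor <;> linarith
  have hEs : ∀ x, x ∈ E ↔ 1 - x ∈ E := by
    intro x
    constructor
    · rintro (⟨h1, h2⟩ | ⟨h1, h2⟩)
      · right; constructor <;> linarith
      · left; constructor <;> linarith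
    · rintro (⟨h1, h2⟩ | ⟨h1, h2⟩)
      · right; constructor <;> linarith
      · left; constructor <;> linarith
  have hRs : ∀ x, x ∈ R ↔ 1 - x ∈ R := by
    intro x
    by_cases hx : x ∈ Ioo (0:ℝ) 1
    · exact hRsym x hx
    · refine ⟨fun h => absurd (hRsub h) hx, fun h => absurd ?_ hx⟩
      obtain ⟨h1, h2⟩ := hRsub h
      constructor <;> linarith
  have hEvol : volume.real E = α := by
    have hd : Disjoint (Ioo (0:ℝ) (α/2)) (Ioo (1 - α/2) 1) := by
      rw [Set.disjoint_left]
      rintro x ⟨h1, h2⟩ ⟨h3, h4⟩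
      linarith
    rw [hE, measureReal_union hd measurableSet_Ioo measure_Ioo_lt_top.ne measure_Ioo_lt_top.ne, Real.volume_real_Ioo_of_le (by linarith),
      Real.volume_real_Ioo_of_le (by linarith)]
    ring
  have hRv : volume.real R = α := by
    rw [Measure.real, hRvol, ENNReal.toReal_ofReal hα0.le]
  set c := (α/2) ^ γ + (1 - α/2) ^ γ with hc
  obtain ⟨iR, eR⟩ := aux_split γ c hγ0 R hRmeas (hRsub.trans Ioo_subset_Icc_self) hRs
  obtain ⟨iE, eE⟩ := aux_split γ c hγ0 E hEm hEsub hEs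
  have key : ∫ x in E, (x ^ γ + (1 - x) ^ γ - c) ≤ ∫ x in R, (x ^ γ + (1 - x) ^ γ - c) := by
    rw [← integral_indicator hEm, ← integral_indicator hRmeas]
    refine integral_mono (iE.integrable_indicator hEm) (iR.integrable_indicator hRmeas) ?_
    intro x
    by_cases hxE : x ∈ E <;> by_cases hxR : x ∈ R
    · simp [hxE, hxR]
    · simp only [indicator_of_mem hxE, indicator_of_notMem hxR]
      rcases hxE with ⟨h1, h2⟩ | ⟨h1, h2⟩
      · have := aux_mono γ hγ0 hγ1 x (α/2) h1.le h2.le (by linarith)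
        linarith
      · have := aux_mono γ hγ0 hγ1 (1 - x) (α/2) (by linarith) (by linarith) (by linarith)
        rw [sub_sub_cancel] at this
        linarith
    · simp only [indicator_of_notMem hxE, indicator_of_mem hxR]
      obtain ⟨h1, h2⟩ := hRsub hxR
      have h3 : α/2 ≤ x := by
        by_contra h
        exact hxE (Or.inl ⟨h1, not_le.1 h⟩)
      have h4 : x ≤ 1 - α/2 := by
        by_contra h
        exact hxE (Or.inr ⟨not_le.1 h, h2⟩)
      have := aux_mono γ hγ0 hγ1 (α/2) x (by linarith) h3 h4
      linarith
    · simp [hxE, hxR]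
  rw [eR, eE, hEvol, hRv] at key
  linarith
end

section
/- For every γ with 0 < γ < 1 and every α with 0 < α < 1, the power of the central test strictly exceeds the power of the extreme-tails test against f₁: ((1+α)/2)^{1+γ} − ((1−α)/2)^{1+γ} > (α/2)^{1+γ} + 1 − (1 − α/2)^{1+γ}. -/
theorem aux_convex (γ : ℝ) (hγ0 : 0 < γ) (hγ1 : γ < 1) :
    StrictConvexOn ℝ (Set.Icc (0:ℝ) (1/2)) (fun x : ℝ => x ^ (1+γ) - (1-x) ^ (1+γ)) := by
  have h1 : ∀ x ∈ Set.Ioo (0:ℝ) (1/2), HasDerivAt (fun x : ℝ => x ^ (1+γ) - (1-x) ^ (1+γ))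
      ((1+γ) * (x ^ γ + (1-x) ^ γ)) x := by
    intro x hx
    have a := (hasDerivAt_id x).rpow_const (p := 1+γ) (Or.inl hx.1.ne')
    have b := ((hasDerivAt_id x).const_sub 1).rpow_const (p := 1+γ)
      (Or.inl (by simp only [id]; linarith [hx.2]))
    refine HasDerivAt.congr_deriv (a.sub b) ?_
    simp only [id, add_sub_cancel_left]
    ring
  have h2 : ∀ x ∈ Set.Ioo (0:ℝ) (1/2), HasDerivAt (fun x : ℝ => (1+γ) * (x ^ γ + (1-x) ^ γ))
      ((1+γ) * (γ * (x ^ (γ-1) - (1-x) ^ (γ-1)))) x := by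
    intro x hx
    have a := (hasDerivAt_id x).rpow_const (p := γ) (Or.inl hx.1.ne')
    have b := ((hasDerivAt_id x).const_sub 1).rpow_const (p := γ)
      (Or.inl (by simp only [id]; linarith [hx.2]))
    refine HasDerivAt.congr_deriv ((a.add b).const_mul (1+γ)) ?_
    simp only [id]
    ring
  apply strictConvexOn_of_deriv2_pos (convex_Icc _ _)
  · apply ContinuousOn.sub
    · exact continuousOn_id.rpow_const (fun x _ => Or.inr (by linarith))
    · exact (continuousOn_const.sub continuousOn_id).rpow_const (fun x _ => Or.inr (by linarith))
  · intro x hx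
    rw [interior_Icc] at hx
    have e : deriv (fun x : ℝ => x ^ (1+γ) - (1-x) ^ (1+γ)) =ᶠ[nhds x]
        (fun x : ℝ => (1+γ) * (x ^ γ + (1-x) ^ γ)) := by
      filter_upwards [isOpen_Ioo.mem_nhds hx] with y hy using (h1 y hy).deriv
    simp only [Function.iterate_succ, Function.iterate_zero, Function.comp, id]
    rw [e.deriv_eq, (h2 x hx).deriv]
    have := Real.rpow_lt_rpow_of_neg hx.1 (show x < 1 - x by linarith [hx.2])
      (show γ - 1 < 0 by linarith)
    have : 0 < x ^ (γ-1) - (1-x) ^ (γ-1) := by linarith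
    positivity

theorem central_beats_tails_concave (γ α : ℝ) (hγ0 : 0 < γ) (hγ1 : γ < 1)
    (hα0 : 0 < α) (hα1 : α < 1) :
    ((1+α)/2) ^ (1+γ) - ((1-α)/2) ^ (1+γ) >
      (α/2) ^ (1+γ) + 1 - (1 - α/2) ^ (1+γ) := by
  have H := (aux_convex γ hγ0 hγ1).2
  have m0 : (0:ℝ) ∈ Set.Icc (0:ℝ) (1/2) := by constructor <;> norm_num
  have m1 : (1/2:ℝ) ∈ Set.Icc (0:ℝ) (1/2) := by constructor <;> norm_num
  have A := H m0 m1 (by norm_num) (show 0 < 1 - α by linarith) hα0 (by ring)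
  have B := H m0 m1 (by norm_num) hα0 (show 0 < 1 - α by linarith) (by ring)
  simp only [smul_eq_mul] at A B
  rw [show (1-α)*0 + α*(1/2) = α/2 by ring] at A
  rw [show α*0 + (1-α)*(1/2) = (1-α)/2 by ring,
    show 1 - (1-α)/2 = (1+α)/2 by ring] at B
  rw [show (1:ℝ) - 1/2 = 1/2 by norm_num, sub_zero, Real.one_rpow,
    Real.zero_rpow (by linarith)] at A B
  linarith
end

section
/- For every γ > 1 and every α with 0 < α < 1, the power of the extreme-tails test strictly exceeds the power of the central test against f₁: (α/2)^{1+γ} + 1 − (1 − α/2)^{1+γ} > ((1+α)/2)^{1+γ} − ((1−α)/2)^{1+γ}. -/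
theorem tb_aux (q a : ℝ) (hq : 1 < q) (h0 : 0 < a) (h1 : a < 1/4) :
    (1/2+a)^q + (1/2-a)^q < a^q + (1-a)^q := by
  have hc := strictConvexOn_rpow hq
  have hd : 0 < 1 - 2*a := by linarith
  obtain ⟨t, ht⟩ : ∃ t, t = (1/2-2*a)/(1-2*a) := ⟨_, rfl⟩
  have ht' : t * (1-2*a) = 1/2-2*a := by rw [ht]; field_simp
  have t0 : 0 < t := by rw [ht]; apply div_pos <;> linarith
  have t1 : t < 1 := by rw [ht, div_lt_one hd]; linarith
  have hx : a ∈ Set.Ici (0:ℝ) := h0.le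
  have hy : 1 - a ∈ Set.Ici (0:ℝ) := by simp only [Set.mem_Ici]; linarith
  have hne : a ≠ 1 - a := by intro h; linarith
  have e1 := hc.2 hx hy hne (sub_pos.2 t1) t0 (by ring)
  have e2 := hc.2 hx hy hne t0 (sub_pos.2 t1) (by ring)
  simp only [smul_eq_mul] at e1 e2
  rw [show (1-t)*a + t*(1-a) = 1/2 - a by linarith] at e1
  rw [show t*a + (1-t)*(1-a) = 1/2 + a by linarith] at e2
  linarith

theorem tb_aux2 (p a : ℝ) (hp : 2 < p) (h0 : 0 < a) (h1 : a ≤ 1/4) :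
    0 < a^p + 1 - (1-a)^p - (1/2+a)^p + (1/2-a)^p := by
  have hm : StrictMonoOn (fun x : ℝ => x^p + 1 - (1-x)^p - (1/2+x)^p + (1/2-x)^p)
      (Set.Icc 0 (1/4)) := by
    have hD : ∀ x : ℝ, HasDerivAt (fun x : ℝ => x^p + 1 - (1-x)^p - (1/2+x)^p + (1/2-x)^p)
        (1 * p * x^(p-1) - (-1) * p * (1-x)^(p-1) - 1 * p * (1/2+x)^(p-1)
          + (-1) * p * (1/2-x)^(p-1)) x := by
      intro x
      have hp1 : 1 ≤ p := by linarith
      have i := hasDerivAt_id' x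
      exact ((((i.rpow_const (Or.inr hp1)).add_const 1).sub
        ((i.const_sub 1).rpow_const (Or.inr hp1))).sub
        ((i.const_add (1/2)).rpow_const (Or.inr hp1))).add
        ((i.const_sub (1/2)).rpow_const (Or.inr hp1))
    apply strictMonoOn_of_deriv_pos (convex_Icc _ _)
    · exact fun x _ => (hD x).continuousAt.continuousWithinAt
    · intro x hx
      rw [interior_Icc] at hx
      rw [(hD x).deriv]
      have := tb_aux (p-1) x (by linarith) hx.1 hx.2
      nlinarith
  have := hm (a := 0) (b := a) ⟨le_rfl, by norm_num⟩ ⟨h0.le, h1⟩ h0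
  have hp0 : p ≠ 0 := by linarith
  simpa [Real.zero_rpow hp0] using this

theorem tails_beat_central_convex (γ α : ℝ) (hγ : 1 < γ)
    (hα0 : 0 < α) (hα1 : α < 1) :
    (α/2) ^ (1+γ) + 1 - (1 - α/2) ^ (1+γ) >
      ((1+α)/2) ^ (1+γ) - ((1-α)/2) ^ (1+γ) := by
  rw [show (1+α)/2 = 1/2 + α/2 by ring, show (1-α)/2 = 1/2 - α/2 by ring]
  rcases le_total (α/2) (1/4) with h | h
  · have := tb_aux2 (1+γ) (α/2) (by linarith) (by linarith) h
    linarith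
  · have := tb_aux2 (1+γ) (1/2-α/2) (by linarith) (by linarith) (by linarith)
    rw [show 1 - (1/2 - α/2) = 1/2 + α/2 by ring, show 1/2 + (1/2 - α/2) = 1 - α/2 by ring,
      show 1/2 - (1/2 - α/2) = α/2 by ring] at this
    linarith
end

section
/- For every α with 0 < α < 1/2 there exists γ₀ > 0 such that for all γ with 0 < γ < γ₀, the Type III error probability of the central directional pair under f₁ strictly exceeds the null value α/2: (1/2)^{1+γ} − ((1−α)/2)^{1+γ} > α/2. -/
theorem typeIII_exceeds_null_for_small_gamma (α : ℝ) (hα0 : 0 < α) (hα1 : α < 1/2) :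
    ∃ γ₀ > (0:ℝ), ∀ γ : ℝ, 0 < γ → γ < γ₀ →
      (1/2 : ℝ) ^ (1+γ) - ((1-α)/2) ^ (1+γ) > α/2 := by
  have hb : 0 < (1-α)/2 := by linarith
  have hs := Real.strictConvexOn_mul_log.2
  have hc := hs (show (1/4:ℝ) ∈ Set.Ici 0 by norm_num) (show (1/2:ℝ) ∈ Set.Ici 0 by norm_num)
    (by norm_num) (show 0 < 2*α by linarith) (show 0 < 1-2*α by linarith) (by ring)
  have e4 : Real.log (1/4) = 2 * Real.log (1/2) := by
    rw [show (1/4:ℝ) = (1/2)^2 by norm_num, Real.log_pow]; norm_num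
  have eb : (2*α) * (1/4) + (1-2*α) * (1/2) = (1-α)/2 := by ring
  simp only [smul_eq_mul, e4, eb] at hc
  have hd (a : ℝ) (ha : 0 < a) :
      HasDerivAt (fun γ : ℝ => a ^ (1+γ)) (a * Real.log a) 0 := by
    have := ((hasDerivAt_id (0:ℝ)).const_add 1).const_rpow ha
    simpa [mul_comm] using this
  have h := ((hd (1/2) (by norm_num)).sub (hd _ hb)).tendsto_slope_zero_right
  have hpos : 0 < 1/2 * Real.log (1/2) - (1-α)/2 * Real.log ((1-α)/2) := by linarith
  have hev := h.eventually (lt_mem_nhds hpos)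
  obtain ⟨u, hu, hsub⟩ := mem_nhdsGT_iff_exists_Ioo_subset.1 hev
  refine ⟨u, hu, fun γ h0 h1 => ?_⟩
  have := hsub ⟨h0, h1⟩
  simp only [Set.mem_setOf_eq, smul_eq_mul, Pi.sub_apply, zero_add, add_zero, Real.rpow_one] at this
  have := (mul_pos_iff_of_pos_left (inv_pos.2 h0)).1 this
  linarith
end
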